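/- The inclusion P_k(Ē) ↪ L_k(E) is a flat epimorphic left ring of quotients: it is an epimorphism in the category of rings and L_k(E) is flat as a right P_k(Ē)-module. (In fact, the inclusion is the universal Σ₂-inverting homomorphism, where Σ₂ = {ν_i : i ∈ E^0 not a sink}.) -/

import Mathlib

namespace LPA

/-- A finite quiver: finite sets of vertices and arrows with source and target maps. -/
structure FinQuiver : Type 1 where
  V : Type
  A : Type
  [fintypeV : Fintype V]
  [decEqV : DecidableEq V]
  [fintypeA : Fintype A]
  [decEqA : DecidableEq A]
  src : A → V
  tgt : A → V

attribute [instance] FinQuiver.fintypeV FinQuiver.decEqV FinQuiver.fintypeA FinQuiver.decEqA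

/-- The inverse quiver: all arrows reversed. -/
def FinQuiver.rev (Q : FinQuiver) : FinQuiver where
  V := Q.V
  A := Q.A
  fintypeV := Q.fintypeV
  decEqV := Q.decEqV
  fintypeA := Q.fintypeA
  decEqA := Q.decEqA
  src := Q.tgt
  tgt := Q.src

/-- Generators of the path algebra: a trivial path `p v` for each vertex and an arrow `e` for
each arrow. -/
inductive PathGen (Q : FinQuiver) : Type
  | vertex (v : Q.V) : PathGen Q
  | edge (e : Q.A) : PathGen Q

/-- Defining relations of the path algebra: the trivial paths are pairwise orthogonal
idempotents summing to `1`, and `p (src e) * e = e = e * p (tgt e)`. -/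
inductive PathRel (k : Type) [CommRing k] (Q : FinQuiver) :
    FreeAlgebra k (PathGen Q) → FreeAlgebra k (PathGen Q) → Prop
  | vertex_mul_self (v : Q.V) :
      PathRel k Q (FreeAlgebra.ι k (PathGen.vertex v) * FreeAlgebra.ι k (PathGen.vertex v))
        (FreeAlgebra.ι k (PathGen.vertex v))
  | vertex_mul_ne (v w : Q.V) (h : v ≠ w) :
      PathRel k Q (FreeAlgebra.ι k (PathGen.vertex v) * FreeAlgebra.ι k (PathGen.vertex w)) 0
  | sum_vertex :
      PathRel k Q (∑ v : Q.V, FreeAlgebra.ι k (PathGen.vertex v)) 1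
  | src_mul (e : Q.A) :
      PathRel k Q
        (FreeAlgebra.ι k (PathGen.vertex (Q.src e)) * FreeAlgebra.ι k (PathGen.edge e))
        (FreeAlgebra.ι k (PathGen.edge e))
  | mul_tgt (e : Q.A) :
      PathRel k Q
        (FreeAlgebra.ι k (PathGen.edge e) * FreeAlgebra.ι k (PathGen.vertex (Q.tgt e)))
        (FreeAlgebra.ι k (PathGen.edge e))

/-- The path algebra `P_k(Q)` of a finite quiver `Q`, presented by generators and relations. -/
def PathAlg (k : Type) [CommRing k] (Q : FinQuiver) : Type :=
  RingQuot (PathRel k Q)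

variable (k : Type) [CommRing k] (Q : FinQuiver)

noncomputable instance : Ring (PathAlg k Q) :=
  inferInstanceAs (Ring (RingQuot (PathRel k Q)))

noncomputable instance : Algebra k (PathAlg k Q) :=
  inferInstanceAs (Algebra k (RingQuot (PathRel k Q)))

/-- The quotient map from the free algebra onto the path algebra. -/
noncomputable def PathAlg.mk : FreeAlgebra k (PathGen Q) →ₐ[k] PathAlg k Q :=
  RingQuot.mkAlgHom k (PathRel k Q)

/-- The trivial path (vertex idempotent) `p v` in the path algebra. -/
noncomputable def PathAlg.p (v : Q.V) : PathAlg k Q :=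
  PathAlg.mk k Q (FreeAlgebra.ι k (PathGen.vertex v))

/-- The arrow `e` in the path algebra. -/
noncomputable def PathAlg.arrow (e : Q.A) : PathAlg k Q :=
  PathAlg.mk k Q (FreeAlgebra.ι k (PathGen.edge e))

theorem PathAlg.mk_rel {x y : FreeAlgebra k (PathGen Q)} (h : PathRel k Q x y) :
    PathAlg.mk k Q x = PathAlg.mk k Q y :=
  RingQuot.mkAlgHom_rel k h

theorem PathAlg.p_mul_self (v : Q.V) : PathAlg.p k Q v * PathAlg.p k Q v = PathAlg.p k Q v := by
  have h := PathAlg.mk_rel k Q (PathRel.vertex_mul_self v)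
  simpa [map_mul, PathAlg.p] using h

theorem PathAlg.p_mul_ne (v w : Q.V) (hvw : v ≠ w) :
    PathAlg.p k Q v * PathAlg.p k Q w = 0 := by
  have h := PathAlg.mk_rel k Q (PathRel.vertex_mul_ne v w hvw)
  simpa [map_mul, PathAlg.p] using h

theorem PathAlg.sum_p : (∑ v : Q.V, PathAlg.p k Q v) = 1 := by
  have h := PathAlg.mk_rel k Q (PathRel.sum_vertex)
  simpa [map_sum, PathAlg.p] using h

theorem PathAlg.arrow_mul_tgt (e : Q.A) :
    PathAlg.arrow k Q e * PathAlg.p k Q (Q.tgt e) = PathAlg.arrow k Q e := by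
  have h := PathAlg.mk_rel k Q (PathRel.mul_tgt e)
  simpa [map_mul, PathAlg.p, PathAlg.arrow] using h

theorem PathAlg.src_mul_arrow (e : Q.A) :
    PathAlg.p k Q (Q.src e) * PathAlg.arrow k Q e = PathAlg.arrow k Q e := by
  have h := PathAlg.mk_rel k Q (PathRel.src_mul e)
  simpa [map_mul, PathAlg.p, PathAlg.arrow] using h

/-- The set of vertices `{p v | v ∈ Q.V}` of the path algebra, as a finite set. -/
noncomputable def vertexFinset : Finset (PathAlg k Q) :=
  letI := Classical.decEq (PathAlg k Q)
  Finset.univ.image (PathAlg.p k Q)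

end LPA

namespace LPA

/-- Generators of the Leavitt path algebra: vertex idempotents, arrows, and ghost arrows. -/
inductive LGen (Q : FinQuiver) : Type
  | vertex (v : Q.V) : LGen Q
  | edge (e : Q.A) : LGen Q
  | ghost (e : Q.A) : LGen Q

/-- Defining relations of the Leavitt path algebra `L_k(E)`: (V), (E1), (E2), (CK1), (CK2),
together with `∑ p_v = 1`. -/
inductive LeavittRel (k : Type) [CommRing k] (Q : FinQuiver) :
    FreeAlgebra k (LGen Q) → FreeAlgebra k (LGen Q) → Prop
  | vertex_mul_self (v : Q.V) :
      LeavittRel k Q (FreeAlgebra.ι k (LGen.vertex v) * FreeAlgebra.ι k (LGen.vertex v))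
        (FreeAlgebra.ι k (LGen.vertex v))
  | vertex_mul_ne (v w : Q.V) (h : v ≠ w) :
      LeavittRel k Q (FreeAlgebra.ι k (LGen.vertex v) * FreeAlgebra.ι k (LGen.vertex w)) 0
  | sum_vertex :
      LeavittRel k Q (∑ v : Q.V, FreeAlgebra.ι k (LGen.vertex v)) 1
  | src_mul (e : Q.A) :
      LeavittRel k Q (FreeAlgebra.ι k (LGen.vertex (Q.src e)) * FreeAlgebra.ι k (LGen.edge e))
        (FreeAlgebra.ι k (LGen.edge e))
  | mul_tgt (e : Q.A) :
      LeavittRel k Q (FreeAlgebra.ι k (LGen.edge e) * FreeAlgebra.ι k (LGen.vertex (Q.tgt e)))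
        (FreeAlgebra.ι k (LGen.edge e))
  | tgt_mul_ghost (e : Q.A) :
      LeavittRel k Q (FreeAlgebra.ι k (LGen.vertex (Q.tgt e)) * FreeAlgebra.ι k (LGen.ghost e))
        (FreeAlgebra.ι k (LGen.ghost e))
  | ghost_mul_src (e : Q.A) :
      LeavittRel k Q (FreeAlgebra.ι k (LGen.ghost e) * FreeAlgebra.ι k (LGen.vertex (Q.src e)))
        (FreeAlgebra.ι k (LGen.ghost e))
  | ghost_mul_edge_self (e : Q.A) :
      LeavittRel k Q (FreeAlgebra.ι k (LGen.ghost e) * FreeAlgebra.ι k (LGen.edge e))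
        (FreeAlgebra.ι k (LGen.vertex (Q.tgt e)))
  | ghost_mul_edge_ne (e f : Q.A) (h : e ≠ f) :
      LeavittRel k Q (FreeAlgebra.ι k (LGen.ghost e) * FreeAlgebra.ι k (LGen.edge f)) 0
  | cuntz_krieger (v : Q.V) (h : ∃ e : Q.A, Q.src e = v) :
      LeavittRel k Q
        (∑ e ∈ Finset.univ.filter (fun e : Q.A => Q.src e = v),
          FreeAlgebra.ι k (LGen.edge e) * FreeAlgebra.ι k (LGen.ghost e))
        (FreeAlgebra.ι k (LGen.vertex v))

/-- The Leavitt path algebra `L_k(E)`. -/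
def Leavitt (k : Type) [CommRing k] (Q : FinQuiver) : Type :=
  RingQuot (LeavittRel k Q)

variable (k : Type) [CommRing k] (Q : FinQuiver)

noncomputable instance : Ring (Leavitt k Q) :=
  inferInstanceAs (Ring (RingQuot (LeavittRel k Q)))

noncomputable instance : Algebra k (Leavitt k Q) :=
  inferInstanceAs (Algebra k (RingQuot (LeavittRel k Q)))

/-- The quotient map from the free algebra onto the Leavitt path algebra. -/
noncomputable def Leavitt.mk : FreeAlgebra k (LGen Q) →ₐ[k] Leavitt k Q :=
  RingQuot.mkAlgHom k (LeavittRel k Q)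

/-- The vertex idempotent `p v` in the Leavitt path algebra. -/
noncomputable def Leavitt.p (v : Q.V) : Leavitt k Q :=
  Leavitt.mk k Q (FreeAlgebra.ι k (LGen.vertex v))

/-- The arrow `e` in the Leavitt path algebra. -/
noncomputable def Leavitt.ed (e : Q.A) : Leavitt k Q :=
  Leavitt.mk k Q (FreeAlgebra.ι k (LGen.edge e))

/-- The ghost arrow `ē` in the Leavitt path algebra. -/
noncomputable def Leavitt.gh (e : Q.A) : Leavitt k Q :=
  Leavitt.mk k Q (FreeAlgebra.ι k (LGen.ghost e))

theorem Leavitt.mk_rel {x y : FreeAlgebra k (LGen Q)} (h : LeavittRel k Q x y) :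
    Leavitt.mk k Q x = Leavitt.mk k Q y :=
  RingQuot.mkAlgHom_rel k h

theorem Leavitt.p_mul_self (v : Q.V) : Leavitt.p k Q v * Leavitt.p k Q v = Leavitt.p k Q v := by
  have h := Leavitt.mk_rel k Q (LeavittRel.vertex_mul_self v)
  simpa [map_mul, Leavitt.p] using h

theorem Leavitt.p_mul_ne (v w : Q.V) (hvw : v ≠ w) :
    Leavitt.p k Q v * Leavitt.p k Q w = 0 := by
  have h := Leavitt.mk_rel k Q (LeavittRel.vertex_mul_ne v w hvw)
  simpa [map_mul, Leavitt.p] using h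

theorem Leavitt.sum_p : (∑ v : Q.V, Leavitt.p k Q v) = 1 := by
  have h := Leavitt.mk_rel k Q (LeavittRel.sum_vertex)
  simpa [map_sum, Leavitt.p] using h

theorem Leavitt.tgt_mul_gh (e : Q.A) :
    Leavitt.p k Q (Q.tgt e) * Leavitt.gh k Q e = Leavitt.gh k Q e := by
  have h := Leavitt.mk_rel k Q (LeavittRel.tgt_mul_ghost e)
  simpa [map_mul, Leavitt.p, Leavitt.gh] using h

theorem Leavitt.gh_mul_src (e : Q.A) :
    Leavitt.gh k Q e * Leavitt.p k Q (Q.src e) = Leavitt.gh k Q e := by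
  have h := Leavitt.mk_rel k Q (LeavittRel.ghost_mul_src e)
  simpa [map_mul, Leavitt.p, Leavitt.gh] using h

/-- The canonical embedding `P_k(Ē) → L_k(E)` of the path algebra of the inverse quiver into
the Leavitt path algebra, sending `p v ↦ p v` and each reversed arrow `ē ↦ ē`. -/
noncomputable def revToLeavitt : PathAlg k Q.rev →ₐ[k] Leavitt k Q :=
  RingQuot.liftAlgHom k ⟨((FreeAlgebra.lift k fun g =>
    match g with
    | PathGen.vertex v => Leavitt.p k Q v
    | PathGen.edge e => Leavitt.gh k Q e : FreeAlgebra k (PathGen Q.rev) →ₐ[k] Leavitt k Q)), by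
      intro x y h
      induction h with
      | vertex_mul_self v =>
          simp only [map_mul, FreeAlgebra.lift_ι_apply]
          exact Leavitt.p_mul_self k Q v
      | vertex_mul_ne v w h =>
          simp only [map_mul, map_zero, FreeAlgebra.lift_ι_apply]
          exact Leavitt.p_mul_ne k Q v w h
      | sum_vertex =>
          simp only [map_sum, map_one, FreeAlgebra.lift_ι_apply]
          exact Leavitt.sum_p k Q
      | src_mul e =>
          simp only [map_mul, FreeAlgebra.lift_ι_apply]
          exact Leavitt.tgt_mul_gh k Q e
      | mul_tgt e =>
          simp only [map_mul, FreeAlgebra.lift_ι_apply]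
          exact Leavitt.gh_mul_src k Q e⟩

/-- The canonical embedding `P_k(E) → L_k(E)` of the path algebra into the Leavitt path
algebra, sending `p v ↦ p v` and each arrow `e ↦ e`. -/
noncomputable def pathToLeavitt : PathAlg k Q →ₐ[k] Leavitt k Q :=
  RingQuot.liftAlgHom k ⟨((FreeAlgebra.lift k fun g =>
    match g with
    | PathGen.vertex v => Leavitt.p k Q v
    | PathGen.edge e => Leavitt.ed k Q e : FreeAlgebra k (PathGen Q) →ₐ[k] Leavitt k Q)), by
      intro x y h
      induction h with
      | vertex_mul_self v =>
          simp only [map_mul, FreeAlgebra.lift_ι_apply]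
          exact Leavitt.p_mul_self k Q v
      | vertex_mul_ne v w h =>
          simp only [map_mul, map_zero, FreeAlgebra.lift_ι_apply]
          exact Leavitt.p_mul_ne k Q v w h
      | sum_vertex =>
          simp only [map_sum, map_one, FreeAlgebra.lift_ι_apply]
          exact Leavitt.sum_p k Q
      | src_mul e =>
          simp only [map_mul, FreeAlgebra.lift_ι_apply]
          have h := Leavitt.mk_rel k Q (LeavittRel.src_mul e)
          simpa [map_mul, Leavitt.p, Leavitt.ed] using h
      | mul_tgt e =>
          simp only [map_mul, FreeAlgebra.lift_ι_apply]
          have h := Leavitt.mk_rel k Q (LeavittRel.mul_tgt e)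
          simpa [map_mul, Leavitt.p, Leavitt.ed] using h⟩

end LPA

namespace LPA

open TensorProduct

variable (P L : Type) [Ring P] [Ring L] (φ : P →+* L)

/-- The subgroup of relations defining the balanced tensor product `L ⊗_P M` (where `L` is a
right `P`-module via `φ` and `M` a left `P`-module) as a quotient of `L ⊗_ℤ M`. -/
noncomputable def trel (M : Type) [AddCommGroup M] [Module P M] :
    Submodule L (TensorProduct ℤ L M) :=
  Submodule.span L
    {z | ∃ (l : L) (p : P) (m : M), z = (l * φ p) ⊗ₜ[ℤ] m - l ⊗ₜ[ℤ] (p • m)}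

/-- The balanced tensor product `L ⊗_P M`, a left `L`-module. -/
abbrev TensorPhi (M : Type) [AddCommGroup M] [Module P M] : Type :=
  TensorProduct ℤ L M ⧸ trel P L φ M

/-- Functoriality of `L ⊗_P -` : the map induced on balanced tensor products by a `P`-linear
map `f : M → N`. -/
noncomputable def tmap {M N : Type} [AddCommGroup M] [Module P M] [AddCommGroup N]
    [Module P N] (f : M →ₗ[P] N) : TensorPhi P L φ M →ₗ[L] TensorPhi P L φ N :=
  Submodule.mapQ _ _
    (TensorProduct.AlgebraTensorModule.map (LinearMap.id : L →ₗ[L] L)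
      f.toAddMonoidHom.toIntLinearMap)
    (by
      refine Submodule.span_le.mpr ?_
      rintro z ⟨l, p, m, rfl⟩
      simp only [SetLike.mem_coe, Submodule.mem_comap, map_sub,
        TensorProduct.AlgebraTensorModule.map_tmul, LinearMap.id_coe, id_eq,
        AddMonoidHom.coe_toIntLinearMap, LinearMap.toAddMonoidHom_coe]
      exact Submodule.subset_span ⟨l, p, f m, by rw [f.map_smul]⟩)

/-- `L` is flat as a right `P`-module (via `φ : P → L`): the functor `L ⊗_P -` preserves
injectivity. -/
def RightFlat : Prop :=
  ∀ (M N : Type) [AddCommGroup M] [Module P M] [AddCommGroup N] [Module P N],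
    ∀ f : M →ₗ[P] N, Function.Injective f → Function.Injective (tmap P L φ f)

end LPA

/-!
The map is an epimorphism because, at a vertex `v` emitting the arrows `e₁, …, eₙ`, the
Cuntz–Krieger relations say that the row `(e₁, …, eₙ)` is inverse to the column `(ē₁, …, ēₙ)`: the
images of the arrows are determined by those of the ghost arrows and the vertices.

For flatness, `L_k(E)` is recognised as a ring of quotients of `P_k(Ē)`. Call an element of a
`P_k(Ē)`-module torsion if it is killed by all ghost paths `ēₙ ⋯ ē₁` such that `e₁ ⋯ eₙ` is
sufficiently long or ends at a sink.

* Left multiplication by such ghost paths takes each `a ∈ L_k(E)` into `P_k(Ē)`, since `ē f` is a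
  vertex or `0`.
* By the Cuntz–Krieger relations, `L_k(E)`-modules have no torsion.
* If `1 ⊗ y = 0` in `L_k(E) ⊗ N`, then `y` is torsion: `L_k(E)` acts on germs, at the boundary of
  path space, of functions from paths to `N`. The map sending `y` to the germ of `w ↦ w • y` is
  `P_k(Ē)`-linear, so it factors through `L_k(E) ⊗ N`, and its kernel is the torsion of `N`.

If `f : M → N` is injective and `1 ⊗ f` kills `x`, then for all ghost paths `w` as above `w • x` has
the form `1 ⊗ m`, where `f m`, and hence `m`, is torsion. So `w • x = 0` and therefore `x = 0`.
-/

namespace LPA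

open Filter TensorProduct

section Flatness

variable {P L : Type} [Ring P] [Ring L] (φ : P →+* L)
variable (M : Type) [AddCommGroup M] [Module P M]

/-- The unit `m ↦ 1 ⊗ m` of extension of scalars along `φ`, as a `φ`-semilinear map. -/
noncomputable def TensorPhi.unit : M →ₛₗ[φ] TensorPhi P L φ M where
  toFun m := (trel P L φ M).mkQ (1 ⊗ₜ[ℤ] m)
  map_add' m m' := by rw [tmul_add, map_add]
  map_smul' p m := Eq.symm <| (Submodule.Quotient.eq _).2 <| Submodule.subset_span
    ⟨1, p, m, by simp only [smul_tmul', smul_eq_mul, one_mul, mul_one]⟩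

variable {M}

theorem TensorPhi.mk_tmul (b : L) (m : M) :
    (trel P L φ M).mkQ (b ⊗ₜ[ℤ] m) = b • TensorPhi.unit φ M m := by
  change _ = (trel P L φ M).mkQ (b • (1 ⊗ₜ[ℤ] m))
  rw [smul_tmul', smul_eq_mul, mul_one]

theorem TensorPhi.tmap_unit {N : Type} [AddCommGroup N] [Module P N] (f : M →ₗ[P] N) (m : M) :
    tmap P L φ f (TensorPhi.unit φ M m) = TensorPhi.unit φ N (f m) :=
  rfl

variable {φ}

theorem TensorPhi.eq_zero_of_unit_eq_zero {X : Type*} [AddCommGroup X] [Module L X]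
    (ψ : M →ₛₗ[φ] X) {m : M} (hm : TensorPhi.unit φ M m = 0) : ψ m = 0 := by
  let Ψ : L ⊗[ℤ] M →ₗ[L] X := AlgebraTensorModule.lift
    (LinearMap.toSpanSingleton L (M →ₗ[ℤ] X) ψ.toAddMonoidHom.toIntLinearMap)
  have Ψ_tmul (b : L) (m : M) : Ψ (b ⊗ₜ m) = b • ψ m := rfl
  have trel_le_ker : trel P L φ M ≤ Ψ.ker := by
    refine Submodule.span_le.2 ?_
    rintro _ ⟨b, p, m, rfl⟩
    rw [SetLike.mem_coe, LinearMap.mem_ker, map_sub, Ψ_tmul, Ψ_tmul, map_smulₛₗ, mul_smul, sub_self]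
  have hΨ := trel_le_ker ((Submodule.Quotient.mk_eq_zero _).1 hm)
  rwa [LinearMap.mem_ker, Ψ_tmul, one_smul] at hΨ

theorem TensorPhi.eventually_smul_mem_range_unit {ι : Type*} {l : Filter ι} {a : ι → L}
    (ha : ∀ b : L, ∀ᶠ i in l, a i * b ∈ Set.range φ) (x : TensorPhi P L φ M) :
    ∀ᶠ i in l, a i • x ∈ Set.range (TensorPhi.unit φ M) := by
  obtain ⟨z, rfl⟩ := Submodule.mkQ_surjective _ x
  induction z using TensorProduct.induction_on with
  | zero => exact .of_forall fun i => ⟨0, by rw [map_zero, map_zero, smul_zero]⟩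
  | tmul b m =>
    filter_upwards [ha b] with i ⟨p, hp⟩
    exact ⟨p • m, by rw [map_smulₛₗ, hp, TensorPhi.mk_tmul, mul_smul]⟩
  | add y z hy hz =>
    filter_upwards [hy, hz] with i ⟨m, hm⟩ ⟨m', hm'⟩
    exact ⟨m + m', by rw [map_add, map_add, smul_add, hm, hm']⟩

/-- The filter plays the role of a Gabriel topology on `P`: it suffices that `L` be its ring of
fractions and that `N → L ⊗ N` kill torsion elements only. -/
theorem RightFlat.of_filter {ι : Type*} (l : Filter ι) (d : ι → P)
    (mul_mem_range : ∀ b : L, ∀ᶠ i in l, φ (d i) * b ∈ Set.range φ)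
    (torsionFree : ∀ (X : Type) [AddCommGroup X] [Module L X] (x : X),
      (∀ᶠ i in l, φ (d i) • x = 0) → x = 0)
    (torsion_of_unit_eq_zero : ∀ (N : Type) [AddCommGroup N] [Module P N] (y : N),
      TensorPhi.unit φ N y = 0 → ∀ᶠ i in l, d i • y = 0) :
    RightFlat P L φ := by
  intro M N _ _ _ _ f hf
  rw [injective_iff_map_eq_zero]
  intro x hx
  refine torsionFree _ x ?_
  filter_upwards [TensorPhi.eventually_smul_mem_range_unit mul_mem_range x] with i ⟨m, hm⟩
  have unit_eq_zero : TensorPhi.unit φ N (f m) = 0 := by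
    rw [← TensorPhi.tmap_unit, hm, map_smul, hx, smul_zero]
  rw [← hm]
  refine torsionFree _ _ ?_
  filter_upwards [torsion_of_unit_eq_zero N (f m) unit_eq_zero] with j hj
  have smul_eq_zero : d j • m = 0 := hf (by rw [map_smul, hj, map_zero])
  rw [← map_smulₛₗ, smul_eq_zero, map_zero]

end Flatness

section Words

variable {Q : FinQuiver}

/-- Words `e₁ ⋯ eₙ` of arrows of `Q` with a terminal vertex `v`, encoding paths of `Q` that end
at `v`. Composability of the letters is not built in; it is the predicate `Word.IsPath`. -/
inductive Word (Q : FinQuiver) : Type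
  | nil (v : Q.V) : Word Q
  | cons (e : Q.A) (w : Word Q) : Word Q

/-- The vertex at which a word starts. -/
def Word.src : Word Q → Q.V
  | nil v => v
  | cons e _ => Q.src e

/-- Composability: each letter ends where the rest of the word starts. -/
def Word.IsPath : Word Q → Prop
  | nil _ => True
  | cons e w => w.src = Q.tgt e ∧ w.IsPath

/-- A word is `n`-deep if it has at least `n` letters or its terminal vertex is a sink. -/
def Word.IsDeep : ℕ → Word Q → Prop
  | 0, _ => True
  | _ + 1, nil v => ∀ e, Q.src e ≠ v
  | n + 1, cons _ w => w.IsDeep n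

theorem Word.IsDeep.of_succ : ∀ {n : ℕ} {w : Word Q}, w.IsDeep (n + 1) → w.IsDeep n
  | 0, _, _ => trivial
  | _ + 1, nil _, h => h
  | n + 1, cons _ _, h => IsDeep.of_succ (n := n) h

variable (Q) in
/-- The filter of neighbourhoods of the boundary of the path space of `Q`, which consists of the
infinite paths and the finite paths ending at a sink. -/
def boundary : Filter (Word Q) :=
  ⨅ n : ℕ, 𝓟 {w | w.IsPath ∧ w.IsDeep n}

theorem eventually_boundary {p : Word Q → Prop} :
    (∀ᶠ w in boundary Q, p w) ↔ ∃ n, ∀ w, w.IsPath → w.IsDeep n → p w := by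
  have anti : Antitone fun n => {w : Word Q | w.IsPath ∧ w.IsDeep n} :=
    antitone_nat_of_succ_le fun n w hw => ⟨hw.1, hw.2.of_succ⟩
  simpa only [boundary, true_and, Set.mem_ofPred_eq, and_imp] using
    (hasBasis_iInf_principal anti.directed_ge).eventually_iff (q := p)

/-- The partial right action of the generators on words: `w` stands for the product
`ēₙ ⋯ ē₁` in the Leavitt path algebra, and `none` for zero. -/
def LGen.act : LGen Q → Word Q → Option (Word Q)
  | vertex v, w => if w.src = v then some w else none
  | edge _, .nil _ => none
  | edge e, .cons f w => if f = e ∧ w.src = Q.tgt e then some w else none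
  | ghost e, w => if w.src = Q.tgt e then some (.cons e w) else none

theorem LGen.isPath_of_mem_act {g : LGen Q} {w w' : Word Q} (h : w' ∈ g.act w) (hw : w.IsPath) :
    w'.IsPath := by
  cases g <;> cases w <;> grind [LGen.act, Word.IsPath]

theorem LGen.isDeep_of_mem_act {g : LGen Q} {w w' : Word Q} {n : ℕ} (h : w' ∈ g.act w)
    (hw : w.IsDeep (n + 1)) : w'.IsDeep n := by
  have := hw.of_succ
  cases g <;> cases w <;> cases n <;> grind [LGen.act, Word.IsDeep, Word.IsDeep.of_succ]

theorem LGen.eventually_act (g : LGen Q) {p : Word Q → Prop} (h : ∀ᶠ w in boundary Q, p w) :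
    ∀ᶠ w in boundary Q, ∀ w' ∈ g.act w, p w' := by
  obtain ⟨n, hn⟩ := eventually_boundary.1 h
  exact eventually_boundary.2 ⟨n + 1, fun w hpath hdeep w' hw' =>
    hn w' (isPath_of_mem_act hw' hpath) (isDeep_of_mem_act hw' hdeep)⟩

end Words

section Presentation

variable {k : Type} [CommRing k] {Q : FinQuiver}

variable (k) in
/-- The image of a generator in the Leavitt path algebra. -/
noncomputable def Leavitt.gen (g : LGen Q) : Leavitt k Q :=
  Leavitt.mk k Q (FreeAlgebra.ι k g)

theorem Leavitt.src_mul_ed (e : Q.A) : p k Q (Q.src e) * ed k Q e = ed k Q e := by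
  simpa only [map_mul, p, ed] using mk_rel k Q (.src_mul e)

theorem Leavitt.ed_mul_tgt (e : Q.A) : ed k Q e * p k Q (Q.tgt e) = ed k Q e := by
  simpa only [map_mul, p, ed] using mk_rel k Q (.mul_tgt e)

theorem Leavitt.gh_mul_ed_self (e : Q.A) : gh k Q e * ed k Q e = p k Q (Q.tgt e) := by
  simpa only [map_mul, p, ed, gh] using mk_rel k Q (.ghost_mul_edge_self e)

theorem Leavitt.gh_mul_ed_of_ne {e f : Q.A} (h : e ≠ f) : gh k Q e * ed k Q f = 0 := by
  simpa only [map_mul, map_zero, ed, gh] using mk_rel k Q (.ghost_mul_edge_ne e f h)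

theorem Leavitt.sum_ed_mul_gh {v : Q.V} (h : ∃ e, Q.src e = v) :
    ∑ e with Q.src e = v, ed k Q e * gh k Q e = p k Q v := by
  simpa only [map_sum, map_mul, p, ed, gh] using mk_rel k Q (.cuntz_krieger v h)

@[elab_as_elim]
theorem Leavitt.induction {motive : Leavitt k Q → Prop}
    (algebraMap : ∀ c, motive (algebraMap k _ c)) (gen : ∀ g, motive (gen k g))
    (mul : ∀ a b, motive a → motive b → motive (a * b))
    (add : ∀ a b, motive a → motive b → motive (a + b)) (a : Leavitt k Q) : motive a := by
  obtain ⟨x, rfl⟩ := RingQuot.mkAlgHom_surjective k (LeavittRel k Q) a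
  change motive (mk k Q x)
  induction x using FreeAlgebra.induction with
  | grade0 c => rw [AlgHom.commutes]; exact algebraMap c
  | grade1 g => exact gen g
  | mul x y hx hy => rw [map_mul]; exact mul _ _ hx hy
  | add x y hx hy => rw [map_add]; exact add _ _ hx hy

@[elab_as_elim]
theorem PathAlg.induction {motive : PathAlg k Q → Prop}
    (algebraMap : ∀ c, motive (algebraMap k _ c)) (p : ∀ v, motive (p k Q v))
    (arrow : ∀ e, motive (arrow k Q e))
    (mul : ∀ a b, motive a → motive b → motive (a * b))
    (add : ∀ a b, motive a → motive b → motive (a + b)) (a : PathAlg k Q) : motive a := by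
  obtain ⟨x, rfl⟩ := RingQuot.mkAlgHom_surjective k (PathRel k Q) a
  change motive (mk k Q x)
  induction x using FreeAlgebra.induction with
  | grade0 c => rw [AlgHom.commutes]; exact algebraMap c
  | grade1 g =>
    cases g with
    | vertex v => exact p v
    | edge e => exact arrow e
  | mul x y hx hy => rw [map_mul]; exact mul _ _ hx hy
  | add x y hx hy => rw [map_add]; exact add _ _ hx hy

theorem revToLeavitt_p (v : Q.V) :
    revToLeavitt k Q (PathAlg.p k Q.rev v) = Leavitt.p k Q v :=
  (RingQuot.liftAlgHom_mkAlgHom_apply k _ _ _).trans (FreeAlgebra.lift_ι_apply _ _)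

theorem revToLeavitt_arrow (e : Q.A) :
    revToLeavitt k Q (PathAlg.arrow k Q.rev e) = Leavitt.gh k Q e :=
  (RingQuot.liftAlgHom_mkAlgHom_apply k _ _ _).trans (FreeAlgebra.lift_ι_apply _ _)

end Presentation

section Epimorphism

variable {k : Type} [CommRing k] {Q : FinQuiver} {T : Type*} [Semiring T]

theorem map_ed_eq_of_map_p_eq_of_map_gh_eq {g₁ g₂ : Leavitt k Q →+* T}
    (hp : ∀ v, g₁ (Leavitt.p k Q v) = g₂ (Leavitt.p k Q v))
    (hgh : ∀ e, g₁ (Leavitt.gh k Q e) = g₂ (Leavitt.gh k Q e)) (e : Q.A) :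
    g₁ (Leavitt.ed k Q e) = g₂ (Leavitt.ed k Q e) := by
  have orthogonal (f : Q.A) (hf : f ≠ e) :
      g₁ (Leavitt.ed k Q f) * g₂ (Leavitt.gh k Q f * Leavitt.ed k Q e) = 0 := by
    rw [Leavitt.gh_mul_ed_of_ne hf, map_zero, mul_zero]
  calc g₁ (Leavitt.ed k Q e)
      = g₁ (Leavitt.ed k Q e) * g₂ (Leavitt.gh k Q e * Leavitt.ed k Q e) := by
        rw [Leavitt.gh_mul_ed_self, ← hp, ← map_mul, Leavitt.ed_mul_tgt]
    _ = ∑ f with Q.src f = Q.src e,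
          g₁ (Leavitt.ed k Q f) * g₂ (Leavitt.gh k Q f * Leavitt.ed k Q e) :=
        (Finset.sum_eq_single_of_mem e (by simp) fun f _ hf => orthogonal f hf).symm
    _ = g₁ (Leavitt.p k Q (Q.src e)) * g₂ (Leavitt.ed k Q e) := by
        simp only [← Leavitt.sum_ed_mul_gh ⟨e, rfl⟩, map_sum, Finset.sum_mul, map_mul, hgh,
          mul_assoc]
    _ = g₂ (Leavitt.ed k Q e) := by rw [hp, ← map_mul, Leavitt.src_mul_ed]

theorem eq_of_comp_revToLeavitt_eq {g₁ g₂ : Leavitt k Q →+* T}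
    (h : g₁.comp (revToLeavitt k Q).toRingHom = g₂.comp (revToLeavitt k Q).toRingHom) :
    g₁ = g₂ := by
  have h' (x : PathAlg k Q.rev) : g₁ (revToLeavitt k Q x) = g₂ (revToLeavitt k Q x) :=
    RingHom.congr_fun h x
  have hp (v : Q.V) : g₁ (Leavitt.p k Q v) = g₂ (Leavitt.p k Q v) := by
    rw [← revToLeavitt_p, h']
  have hgh (e : Q.A) : g₁ (Leavitt.gh k Q e) = g₂ (Leavitt.gh k Q e) := by
    rw [← revToLeavitt_arrow, h']
  ext a
  induction a using Leavitt.induction with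
  | algebraMap c => rw [← AlgHom.commutes (revToLeavitt k Q), h']
  | gen g =>
    cases g with
    | vertex v => exact hp v
    | edge e => exact map_ed_eq_of_map_p_eq_of_map_gh_eq hp hgh e
    | ghost e => exact hgh e
  | mul a b ha hb => rw [map_mul, map_mul, ha, hb]
  | add a b ha hb => rw [map_add, map_add, ha, hb]

end Epimorphism

section GhostPaths

variable (k : Type) [CommRing k] {Q : FinQuiver}

/-- The product `ēₙ ⋯ ē₁` attached to the word `e₁ ⋯ eₙ`. -/
noncomputable def ghostPath : Word Q → PathAlg k Q.rev
  | .nil v => PathAlg.p k Q.rev v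
  | .cons e w => ghostPath w * PathAlg.arrow k Q.rev e

theorem arrow_rev_mul_p_src (e : Q.A) :
    PathAlg.arrow k Q.rev e * PathAlg.p k Q.rev (Q.src e) = PathAlg.arrow k Q.rev e :=
  PathAlg.arrow_mul_tgt k Q.rev e

theorem p_tgt_mul_arrow_rev (e : Q.A) :
    PathAlg.p k Q.rev (Q.tgt e) * PathAlg.arrow k Q.rev e = PathAlg.arrow k Q.rev e :=
  PathAlg.src_mul_arrow k Q.rev e

theorem ghostPath_mul_p_src : ∀ w : Word Q,
    ghostPath k w * PathAlg.p k Q.rev w.src = ghostPath k w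
  | .nil v => PathAlg.p_mul_self k Q.rev v
  | .cons e w => by rw [ghostPath, Word.src, mul_assoc, arrow_rev_mul_p_src]

theorem ghostPath_mul_p (w : Word Q) (v : Q.V) :
    ghostPath k w * PathAlg.p k Q.rev v = ((LGen.vertex v).act w).elim 0 (ghostPath k) := by
  by_cases h : w.src = v
  · subst h
    simp [LGen.act, ghostPath_mul_p_src]
  · rw [← ghostPath_mul_p_src, mul_assoc, PathAlg.p_mul_ne k Q.rev _ _ h]
    simp [LGen.act, h]

theorem ghostPath_mul_arrow (w : Word Q) (e : Q.A) :
    ghostPath k w * PathAlg.arrow k Q.rev e = ((LGen.ghost e).act w).elim 0 (ghostPath k) := by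
  by_cases h : w.src = Q.tgt e
  · simp [LGen.act, h, ghostPath]
  · rw [← p_tgt_mul_arrow_rev, ← mul_assoc, ghostPath_mul_p]
    simp [LGen.act, h]

theorem revToLeavitt_ghostPath_mul_gen (g : LGen Q) :
    ∀ᶠ w in boundary Q, revToLeavitt k Q (ghostPath k w) * Leavitt.gen k g =
      revToLeavitt k Q ((g.act w).elim 0 (ghostPath k)) := by
  cases g with
  | vertex v =>
    refine .of_forall fun w => ?_
    rw [← ghostPath_mul_p, map_mul, revToLeavitt_p]
    rfl
  | ghost e =>
    refine .of_forall fun w => ?_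
    rw [← ghostPath_mul_arrow, map_mul, revToLeavitt_arrow]
    rfl
  | edge e =>
    refine eventually_boundary.2 ⟨1, fun w hpath hdeep => ?_⟩
    change _ * Leavitt.ed k Q e = _
    cases w with
    | nil v =>
      rw [ghostPath, revToLeavitt_p, ← Leavitt.src_mul_ed, ← mul_assoc,
        Leavitt.p_mul_ne k Q v _ (hdeep e).symm, zero_mul]
      exact (map_zero _).symm
    | cons f w =>
      rw [ghostPath, map_mul, revToLeavitt_arrow, mul_assoc]
      by_cases hfe : f = e
      · subst hfe
        rw [Leavitt.gh_mul_ed_self, ← revToLeavitt_p, ← map_mul, ← hpath.1, ghostPath_mul_p_src]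
        simp [LGen.act, hpath.1]
      · simp [Leavitt.gh_mul_ed_of_ne hfe, LGen.act, hfe]

theorem eventually_ghostPath_mul_mem_range (a : Leavitt k Q) :
    ∀ᶠ w in boundary Q, revToLeavitt k Q (ghostPath k w) * a ∈ (revToLeavitt k Q).range := by
  suffices h : ∀ b, (∀ᶠ w in boundary Q,
      revToLeavitt k Q (ghostPath k w) * b ∈ (revToLeavitt k Q).range) →
      ∀ᶠ w in boundary Q,
        revToLeavitt k Q (ghostPath k w) * (a * b) ∈ (revToLeavitt k Q).range by
    simpa only [mul_one] using h 1 (.of_forall fun w => ⟨ghostPath k w, (mul_one _).symm⟩)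
  induction a using Leavitt.induction with
  | algebraMap c =>
    intro b hb
    filter_upwards [hb] with w hw
    rw [← Algebra.smul_def, mul_smul_comm]
    exact Subalgebra.smul_mem _ hw c
  | gen g =>
    intro b hb
    filter_upwards [revToLeavitt_ghostPath_mul_gen k g, g.eventually_act hb] with w hgen hact
    rw [← mul_assoc, hgen]
    cases hw : g.act w with
    | none => simp
    | some w' => exact hact w' hw
  | mul a a' ha ha' =>
    intro b hb
    simpa only [mul_assoc] using ha _ (ha' b hb)
  | add a a' ha ha' =>
    intro b hb
    filter_upwards [ha b hb, ha' b hb] with w hw hw'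
    rw [add_mul, mul_add]
    exact add_mem hw hw'

section TorsionFree

variable {k} {X : Type*} [AddCommMonoid X] [Module (Leavitt k Q) X] {x : X}

theorem Leavitt.eq_zero_of_p_smul_eq_zero (h : ∀ v, Leavitt.p k Q v • x = 0) : x = 0 := by
  rw [← one_smul (Leavitt k Q) x, ← Leavitt.sum_p, Finset.sum_smul]
  exact Finset.sum_eq_zero fun v _ => h v

theorem Leavitt.p_smul_eq_zero_of_gh_smul_eq_zero (h : ∀ e, Leavitt.gh k Q e • x = 0) {v : Q.V}
    (hv : ∃ e, Q.src e = v) : Leavitt.p k Q v • x = 0 := by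
  rw [← Leavitt.sum_ed_mul_gh hv, Finset.sum_smul]
  exact Finset.sum_eq_zero fun e _ => by rw [mul_smul, h, smul_zero]

theorem eq_zero_of_eventually_ghostPath_smul_eq_zero
    (h : ∀ᶠ w in boundary Q, revToLeavitt k Q (ghostPath k w) • x = 0) : x = 0 := by
  obtain ⟨n, hn⟩ := eventually_boundary.1 h
  clear h
  induction n generalizing x with
  | zero =>
    refine Leavitt.eq_zero_of_p_smul_eq_zero (k := k) (Q := Q) fun v => ?_
    simpa only [ghostPath, revToLeavitt_p] using hn (.nil v) trivial trivial
  | succ n ih =>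
    have gh_smul_eq_zero (e : Q.A) : Leavitt.gh k Q e • x = 0 := by
      refine ih fun w hpath hdeep => ?_
      rw [← mul_smul, ← revToLeavitt_arrow, ← map_mul, ghostPath_mul_arrow]
      by_cases hsrc : w.src = Q.tgt e
      · simpa [LGen.act, hsrc] using hn (.cons e w) ⟨hsrc, hpath⟩ hdeep
      · simp [LGen.act, hsrc]
    refine Leavitt.eq_zero_of_p_smul_eq_zero (k := k) (Q := Q) fun v => ?_
    by_cases hv : ∃ e, Q.src e = v
    · exact Leavitt.p_smul_eq_zero_of_gh_smul_eq_zero gh_smul_eq_zero hv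
    · simpa only [ghostPath, revToLeavitt_p] using hn (.nil v) trivial (not_exists.1 hv)

end TorsionFree

end GhostPaths

section Germs

variable (k : Type) [CommRing k] {Q : FinQuiver} {N : Type*} [AddCommMonoid N]

section Orbit

variable [Module (PathAlg k Q.rev) N]

/-- The germ of `w ↦ ghostPath w • m`, which vanishes exactly when `m` is torsion. -/
noncomputable def orbitGerm (m : N) : Germ (boundary Q) N :=
  ↑(fun w : Word Q => ghostPath k w • m)

theorem orbitGerm_add (m m' : N) :
    (orbitGerm k (m + m') : Germ (boundary Q) N) = orbitGerm k m + orbitGerm k m' := by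
  simp only [orbitGerm, smul_add]
  rfl

end Orbit

variable [Module k N]

/-- The operator `(g • f) w = f (g.act w)` on germs at the boundary of `N`-valued functions of
words, with value `0` where `g.act w` is undefined. -/
def LGen.germEnd (g : LGen Q) : Module.End k (Germ (boundary Q) N) where
  toFun := Germ.map' (fun f w => (g.act w).elim 0 f) fun f f' h => by
    filter_upwards [g.eventually_act h] with w hw
    cases hact : g.act w with
    | none => rfl
    | some w' => exact hw w' hact
  map_add' := by
    rintro ⟨f⟩ ⟨f'⟩
    refine congrArg Germ.ofFun (funext fun w => ?_)
    cases hact : g.act w <;> simp [hact]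
  map_smul' := by
    rintro c ⟨f⟩
    refine congrArg Germ.ofFun (funext fun w => ?_)
    cases hact : g.act w <;> simp [hact]

theorem LGen.germEnd_coe (g : LGen Q) (f : Word Q → N) :
    g.germEnd k (f : Germ (boundary Q) N) = ↑(fun w => (g.act w).elim 0 f) :=
  rfl

theorem LGen.germEnd_mul_coe (g g' : LGen Q) (f : Word Q → N) :
    (g.germEnd k * g'.germEnd k : Module.End k (Germ (boundary Q) N)) ↑f =
      ↑(fun w => ((g.act w).bind g'.act).elim 0 f) := by
  refine congrArg Germ.ofFun (funext fun w => ?_)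
  cases hact : g.act w <;> simp [hact]

theorem LGen.germEnd_mul_eq {g g' g'' : LGen Q}
    (h : ∀ w, (g.act w).bind g'.act = g''.act w) :
    g.germEnd k * g'.germEnd k = (g''.germEnd k : Module.End k (Germ (boundary Q) N)) := by
  refine LinearMap.ext fun x => Germ.inductionOn x fun f => ?_
  simp only [germEnd_mul_coe, germEnd_coe, h]

theorem LGen.germEnd_mul_eq_zero {g g' : LGen Q} (h : ∀ w, (g.act w).bind g'.act = none) :
    g.germEnd k * g'.germEnd k = (0 : Module.End k (Germ (boundary Q) N)) := by
  refine LinearMap.ext fun x => Germ.inductionOn x fun f => ?_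
  simp only [germEnd_mul_coe, h]
  rfl

theorem LGen.sum_germEnd_vertex :
    ∑ v, (vertex v).germEnd k = (1 : Module.End k (Germ (boundary Q) N)) := by
  refine LinearMap.ext fun x => Germ.inductionOn x fun f => ?_
  simp only [LinearMap.sum_apply, germEnd_coe]
  refine (map_sum (Germ.coeAddHom (boundary Q) : (Word Q → N) →+ _) _ _).symm.trans ?_
  refine congrArg Germ.ofFun (funext fun w => ?_)
  simp [act, apply_ite (fun o : Option (Word Q) => o.elim 0 f)]

theorem LGen.sum_act_edge_bind_act_ghost {v : Q.V} (hv : ∃ e, Q.src e = v) {w : Word Q}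
    (hpath : w.IsPath) (hdeep : w.IsDeep 1) (f : Word Q → N) :
    ∑ e with Q.src e = v, (((edge e).act w).bind (ghost e).act).elim 0 f =
      ((vertex v).act w).elim 0 f := by
  cases w with
  | nil u =>
    have hu : u ≠ v := by
      rintro rfl
      exact not_exists.2 hdeep hv
    simp [act, Word.src, hu]
  | cons e w =>
    have src_cons : (Word.cons e w).src = Q.src e := rfl
    rw [Finset.sum_filter, Finset.sum_eq_single_of_mem e (Finset.mem_univ e)]
    · by_cases he : Q.src e = v <;> simp [act, src_cons, he, hpath.1]
    · intro e' _ he'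
      simp [act, he'.symm]

theorem LGen.sum_germEnd_edge_mul_germEnd_ghost {v : Q.V} (hv : ∃ e, Q.src e = v) :
    ∑ e with Q.src e = v, (edge e).germEnd k * (ghost e).germEnd k =
      ((vertex v).germEnd k : Module.End k (Germ (boundary Q) N)) := by
  refine LinearMap.ext fun x => Germ.inductionOn x fun f => ?_
  simp only [LinearMap.sum_apply, germEnd_mul_coe, germEnd_coe]
  refine (map_sum (Germ.coeAddHom (boundary Q) : (Word Q → N) →+ _) _ _).symm.trans ?_
  refine Germ.coe_eq.2 ?_
  refine eventually_boundary.2 ⟨1, fun w hpath hdeep => ?_⟩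
  rw [Finset.sum_apply]
  exact sum_act_edge_bind_act_ghost hv hpath hdeep f

theorem LGen.lift_germEnd_eq_of_leavittRel {x y : FreeAlgebra k (LGen Q)}
    (h : LeavittRel k Q x y) :
    FreeAlgebra.lift k (fun g => (g.germEnd k : Module.End k (Germ (boundary Q) N))) x =
      FreeAlgebra.lift k (fun g => g.germEnd k) y := by
  cases h <;> simp only [map_mul, map_sum, map_zero, map_one, FreeAlgebra.lift_ι_apply]
  case sum_vertex => exact sum_germEnd_vertex k
  case cuntz_krieger v hv => exact sum_germEnd_edge_mul_germEnd_ghost k hv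
  case vertex_mul_ne u v huv =>
    exact germEnd_mul_eq_zero k fun w => by grind [act]
  case ghost_mul_edge_ne e f hef =>
    exact germEnd_mul_eq_zero k fun w => by grind [act]
  all_goals exact germEnd_mul_eq k fun w => by cases w <;> grind [act, Word.src]

variable (Q N) in
/-- The representation of the Leavitt path algebra on germs at the boundary. -/
noncomputable def germRep : Leavitt k Q →ₐ[k] Module.End k (Germ (boundary Q) N) :=
  RingQuot.liftAlgHom k ⟨FreeAlgebra.lift k fun g => g.germEnd k,
    fun _ _ => LGen.lift_germEnd_eq_of_leavittRel k⟩

theorem germRep_gen (g : LGen Q) : germRep k Q N (Leavitt.gen k g) = g.germEnd k :=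
  (RingQuot.liftAlgHom_mkAlgHom_apply k _ _ _).trans (FreeAlgebra.lift_ι_apply _ _)

variable [Module (PathAlg k Q.rev) N]

theorem LGen.germEnd_orbitGerm {g : LGen Q} {x : PathAlg k Q.rev}
    (h : ∀ w, ghostPath k w * x = (g.act w).elim 0 (ghostPath k)) (m : N) :
    g.germEnd k (orbitGerm k m) = orbitGerm k (x • m) := by
  refine congrArg Germ.ofFun (funext fun w => ?_)
  rw [← mul_smul, h]
  cases hact : g.act w <;> simp [hact]

theorem germRep_revToLeavitt_orbitGerm [IsScalarTower k (PathAlg k Q.rev) N] (x : PathAlg k Q.rev)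
    (m : N) : germRep k Q N (revToLeavitt k Q x) (orbitGerm k m) = orbitGerm k (x • m) := by
  induction x using PathAlg.induction generalizing m with
  | algebraMap c =>
    rw [AlgHom.commutes, AlgHom.commutes, Module.algebraMap_end_apply, algebraMap_smul]
    simp only [orbitGerm, ← Germ.coe_smul]
    exact congrArg Germ.ofFun (funext fun w => smul_comm c (ghostPath k w) m)
  | p v =>
    rw [revToLeavitt_p (Q := Q) v]
    exact (LinearMap.congr_fun (germRep_gen (Q := Q) k (.vertex v)) _).trans
      (LGen.germEnd_orbitGerm k (fun w : Word Q => ghostPath_mul_p k w v) m)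
  | arrow e =>
    rw [revToLeavitt_arrow (Q := Q) e]
    exact (LinearMap.congr_fun (germRep_gen (Q := Q) k (.ghost e)) _).trans
      (LGen.germEnd_orbitGerm k (fun w : Word Q => ghostPath_mul_arrow k w e) m)
  | mul x y hx hy => rw [map_mul, map_mul, Module.End.mul_apply, hy, hx, mul_smul]
  | add x y hx hy => rw [map_add, map_add, LinearMap.add_apply, hx, hy, add_smul, orbitGerm_add]

end Germs

section Main

variable {k : Type} [CommRing k] {Q : FinQuiver}

theorem eventually_ghostPath_smul_eq_zero_of_unit_eq_zero {N : Type} [AddCommGroup N]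
    [Module (PathAlg k Q.rev) N] {m : N}
    (hm : TensorPhi.unit (revToLeavitt k Q).toRingHom N m = 0) :
    ∀ᶠ w in boundary Q, ghostPath k w • m = 0 := by
  let _ : Module k N := Module.compHom N (algebraMap k (PathAlg k Q.rev))
  have : IsScalarTower k (PathAlg k Q.rev) N := .of_algebraMap_smul fun _ _ => rfl
  let _ : Module (Leavitt k Q) (Germ (boundary Q) N) := Module.compHom _ (germRep k Q N).toRingHom
  let ψ : N →ₛₗ[(revToLeavitt k Q).toRingHom] Germ (boundary Q) N :=
    { toFun := orbitGerm k
      map_add' := orbitGerm_add k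
      map_smul' := fun x m => (germRep_revToLeavitt_orbitGerm k x m).symm }
  exact Germ.coe_eq.1 (TensorPhi.eq_zero_of_unit_eq_zero ψ hm)

variable (k Q) in
theorem rightFlat_revToLeavitt :
    RightFlat (PathAlg k Q.rev) (Leavitt k Q) (revToLeavitt k Q).toRingHom :=
  .of_filter (boundary Q) (ghostPath k)
    (eventually_ghostPath_mul_mem_range k)
    (fun _ _ _ _ => eq_zero_of_eventually_ghostPath_smul_eq_zero)
    (fun _ _ _ _ => eventually_ghostPath_smul_eq_zero_of_unit_eq_zero)

end Main

end LPA

open LPA in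
theorem statement_9_general (k : Type) [CommRing k] (Q : FinQuiver) :
    (∀ (T : Type*) [Semiring T] (g₁ g₂ : Leavitt k Q →+* T),
      g₁.comp (revToLeavitt k Q).toRingHom = g₂.comp (revToLeavitt k Q).toRingHom →
        g₁ = g₂) ∧
    RightFlat (PathAlg k Q.rev) (Leavitt k Q) (revToLeavitt k Q).toRingHom :=
  ⟨fun _ _ _ _ => eq_of_comp_revToLeavitt_eq, rightFlat_revToLeavitt k Q⟩

open LPA in
/-- The inclusion `P_k(Ē) ↪ L_k(E)` is a flat epimorphic left ring of quotients:
it is an epimorphism in the category of rings, and `L_k(E)` is flat as a right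
`P_k(Ē)`-module. -/
theorem statement_9 (k : Type) [Field k] (Q : FinQuiver) :
    (∀ (T : Type) [Ring T] (g₁ g₂ : Leavitt k Q →+* T),
      g₁.comp (revToLeavitt k Q).toRingHom = g₂.comp (revToLeavitt k Q).toRingHom →
        g₁ = g₂) ∧
    RightFlat (PathAlg k Q.rev) (Leavitt k Q) (revToLeavitt k Q).toRingHom := by
  obtain ⟨epi, flat⟩ := statement_9_general k Q
  exact ⟨fun T _ => epi T, flat⟩
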